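/- arXiv:2510.09279 — 3 statements merged into one kernel-verified Lean document; each statement's English description precedes it below -/
import Mathlib

section
/- Every class A operator A ∈ B(H) on a complex Hilbert space H is a paranormal operator. -/
open ContinuousLinearMap Filter

set_option synthInstance.maxHeartbeats 400000

/-- The `p`-th power of an operator (intended for positive operators), via the
continuous functional calculus. -/
noncomputable def opRpow {H : Type*} [NormedAddCommGroup H] [InnerProductSpace ℂ H]
    [CompleteSpace H] (A : H →L[ℂ] H) (p : ℝ) : H →L[ℂ] H :=
  cfc (fun x : ℝ => x ^ p) A

/-- The logarithm of an operator (intended for positive invertible operators), via the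
continuous functional calculus. -/
noncomputable def opLog {H : Type*} [NormedAddCommGroup H] [InnerProductSpace ℂ H]
    [CompleteSpace H] (A : H →L[ℂ] H) : H →L[ℂ] H :=
  cfc Real.log A

/-- `|A| = (A*A)^{1/2}`, via the continuous functional calculus. -/
noncomputable def opAbs {H : Type*} [NormedAddCommGroup H] [InnerProductSpace ℂ H]
    [CompleteSpace H] (A : H →L[ℂ] H) : H →L[ℂ] H :=
  cfc (fun x : ℝ => Real.sqrt x) (adjoint A * A)

/-- `A` is hyponormal: `A*A ≥ AA*`. -/
def Hyponormal {H : Type*} [NormedAddCommGroup H] [InnerProductSpace ℂ H]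
    [CompleteSpace H] (A : H →L[ℂ] H) : Prop :=
  A * adjoint A ≤ adjoint A * A

/-- `A` is `p`-hyponormal: `(A*A)^p ≥ (AA*)^p`. -/
def PHyponormal {H : Type*} [NormedAddCommGroup H] [InnerProductSpace ℂ H]
    [CompleteSpace H] (A : H →L[ℂ] H) (p : ℝ) : Prop :=
  opRpow (A * adjoint A) p ≤ opRpow (adjoint A * A) p

/-- `A` is `(p,k)`-quasihyponormal: `A*^k ((A*A)^p − (AA*)^p) A^k ≥ 0`. -/
def PKQuasihyponormal {H : Type*} [NormedAddCommGroup H] [InnerProductSpace ℂ H]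
    [CompleteSpace H] (A : H →L[ℂ] H) (p : ℝ) (k : ℕ) : Prop :=
  0 ≤ (adjoint A) ^ k * (opRpow (adjoint A * A) p - opRpow (A * adjoint A) p) * A ^ k

/-- `A` is log-hyponormal: `A` invertible and `log(A*A) ≥ log(AA*)`. -/
def LogHyponormal {H : Type*} [NormedAddCommGroup H] [InnerProductSpace ℂ H]
    [CompleteSpace H] (A : H →L[ℂ] H) : Prop :=
  IsUnit A ∧ opLog (A * adjoint A) ≤ opLog (adjoint A * A)

/-- `A` is a class A operator: `|A²| ≥ |A|²`. -/
def ClassA {H : Type*} [NormedAddCommGroup H] [InnerProductSpace ℂ H]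
    [CompleteSpace H] (A : H →L[ℂ] H) : Prop :=
  opAbs A ^ 2 ≤ opAbs (A ^ 2)

/-- `A` is paranormal: `‖Ax‖² ≤ ‖A²x‖ ‖x‖` for all `x`. -/
def Paranormal {H : Type*} [NormedAddCommGroup H] [InnerProductSpace ℂ H]
    (A : H →L[ℂ] H) : Prop :=
  ∀ x : H, ‖A x‖ ^ 2 ≤ ‖A (A x)‖ * ‖x‖

/-- `A` is normaloid: its norm equals its spectral radius. -/
def Normaloid {H : Type*} [NormedAddCommGroup H] [InnerProductSpace ℂ H]
    (A : H →L[ℂ] H) : Prop :=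
  spectralRadius ℂ A = ‖A‖₊

/-- `T` has Bishop's property (β): whenever `(T - z) fₙ(z) → 0` uniformly on compact subsets
of an open set `D ⊆ ℂ`, for analytic `H`-valued functions `fₙ` on `D`, also `fₙ → 0`
uniformly on compact subsets of `D`. -/
def HasBishopBeta {H : Type*} [NormedAddCommGroup H] [InnerProductSpace ℂ H]
    (T : H →L[ℂ] H) : Prop :=
  ∀ D : Set ℂ, IsOpen D → ∀ f : ℕ → ℂ → H,
    (∀ n, AnalyticOnNhd ℂ (f n) D) →
    (∀ K : Set ℂ, K ⊆ D → IsCompact K →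
      TendstoUniformlyOn (fun n z => T (f n z) - z • f n z) 0 atTop K) →
    ∀ K : Set ℂ, K ⊆ D → IsCompact K →
      TendstoUniformlyOn (fun n z => f n z) 0 atTop K

/-- `T` has the single valued extension property: there is no nonzero analytic `H`-valued
function `f` on a nonempty open `D ⊆ ℂ` with `(T - z) f(z) ≡ 0` on `D`. -/
def HasSVEP {H : Type*} [NormedAddCommGroup H] [InnerProductSpace ℂ H]
    (T : H →L[ℂ] H) : Prop :=
  ∀ D : Set ℂ, IsOpen D → D.Nonempty → ∀ f : ℂ → H,
    AnalyticOnNhd ℂ f D → (∀ z ∈ D, T (f z) - z • f z = 0) →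
    ∀ z ∈ D, f z = 0

/-- The restriction of `A` to an invariant subspace `M`, as an operator on `M`. -/
noncomputable def restrictOp {H : Type*} [NormedAddCommGroup H] [InnerProductSpace ℂ H]
    (A : H →L[ℂ] H) (M : Submodule ℂ H) (h : ∀ x ∈ M, A x ∈ M) : M →L[ℂ] M :=
  (A.comp M.subtypeL).codRestrict M (fun x => h x x.2)

section InnerProduct

variable {𝕜 E F G : Type*} [RCLike 𝕜]
  [NormedAddCommGroup E] [InnerProductSpace 𝕜 E]
  [NormedAddCommGroup F] [InnerProductSpace 𝕜 F]
  [NormedAddCommGroup G] [InnerProductSpace 𝕜 G]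

theorem re_inner_apply_self_le_of_le {S T : E →L[𝕜] E} (h : S ≤ T) (x : E) :
    RCLike.re (inner 𝕜 (S x) x) ≤ RCLike.re (inner 𝕜 (T x) x) := by
  have hpos : 0 ≤ RCLike.re (inner 𝕜 ((T - S) x) x) :=
    ((le_def S T).1 h).re_inner_nonneg_left x
  rwa [sub_apply, inner_sub_left, map_sub, sub_nonneg] at hpos

theorem norm_apply_eq_of_adjoint_comp_self_eq [CompleteSpace E] [CompleteSpace F]
    [CompleteSpace G] {S : E →L[𝕜] F} {T : E →L[𝕜] G}
    (h : adjoint S ∘L S = adjoint T ∘L T) (x : E) : ‖S x‖ = ‖T x‖ := by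
  rw [apply_norm_eq_sqrt_inner_adjoint_left, h, ← apply_norm_eq_sqrt_inner_adjoint_left]

end InnerProduct

section AbsoluteValue

variable {H K : Type*} [NormedAddCommGroup H] [InnerProductSpace ℂ H] [CompleteSpace H]
  [NormedAddCommGroup K] [InnerProductSpace ℂ K] [CompleteSpace K]

theorem opAbs_eq_cfcAbs (A : H →L[ℂ] H) : opAbs A = CFC.abs A := by
  rw [opAbs, CFC.abs, CFC.sqrt_eq_real_sqrt _ (star_mul_self_nonneg A), cfcₙ_eq_cfc,
    star_eq_adjoint]

theorem norm_cfcAbs_apply (A : H →L[ℂ] H) (x : H) : ‖CFC.abs A x‖ = ‖A x‖ := by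
  refine norm_apply_eq_of_adjoint_comp_self_eq ?_ x
  have hself : adjoint (CFC.abs A) = CFC.abs A := (CFC.abs_nonneg A).isSelfAdjoint
  rw [hself]
  exact CFC.abs_mul_abs A

theorem norm_apply_sq_le_of_adjoint_comp_self_le_cfcAbs {A : H →L[ℂ] K} {B : H →L[ℂ] H}
    (h : adjoint A ∘L A ≤ CFC.abs B) (x : H) : ‖A x‖ ^ 2 ≤ ‖B x‖ * ‖x‖ :=
  calc
    ‖A x‖ ^ 2 = RCLike.re (inner ℂ ((adjoint A ∘L A) x) x) :=
      apply_norm_sq_eq_inner_adjoint_left A x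
    _ ≤ RCLike.re (inner ℂ (CFC.abs B x) x) := re_inner_apply_self_le_of_le h x
    _ ≤ ‖CFC.abs B x‖ * ‖x‖ := re_inner_le_norm _ _
    _ = ‖B x‖ * ‖x‖ := by rw [norm_cfcAbs_apply]

theorem classA_iff_adjoint_mul_self_le_cfcAbs {A : H →L[ℂ] H} :
    ClassA A ↔ adjoint A * A ≤ CFC.abs (A ^ 2) := by
  rw [ClassA, opAbs_eq_cfcAbs, opAbs_eq_cfcAbs, pow_two (CFC.abs A), CFC.abs_mul_abs,
    star_eq_adjoint]

end AbsoluteValue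

theorem classA_paranormal {H : Type*} [NormedAddCommGroup H]
    [InnerProductSpace ℂ H] [CompleteSpace H]
    (A : H →L[ℂ] H) (hA : ClassA A) : Paranormal A := by
  intro x
  have hle : adjoint A * A ≤ CFC.abs (A ^ 2) := classA_iff_adjoint_mul_self_le_cfcAbs.1 hA
  have hnorm : ‖A x‖ ^ 2 ≤ ‖(A ^ 2) x‖ * ‖x‖ :=
    norm_apply_sq_le_of_adjoint_comp_self_le_cfcAbs hle x
  rwa [pow_two A, mul_apply_eq_comp] at hnorm
end

section
/- Every paranormal operator A ∈ B(H) on a complex Hilbert space H is normaloid, i.e., its operator norm equals its spectral radius. -/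
/-!
Along an orbit of a paranormal operator the sequence `k ↦ ‖A ^ k x‖` is log-convex, so its first
ratio is at most its average ratio: `‖A x‖ ^ n ≤ ‖A ^ n x‖ * ‖x‖ ^ (n - 1)` for `n ≥ 1`.
Taking the supremum over `‖x‖ ≤ 1` gives `‖A ^ n‖ = ‖A‖ ^ n`, and Gelfand's formula turns this
into the equality of the spectral radius with the norm.
-/

open ContinuousLinearMap Filter

set_option synthInstance.maxHeartbeats 400000

theorem pow_succ_le_mul_pow_of_sq_le_mul {R : Type*} [CommSemiring R] [LinearOrder R]
    [IsStrictOrderedRing R] {a : ℕ → R} (ha : ∀ k, 0 ≤ a k)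
    (hconv : ∀ k, a (k + 1) ^ 2 ≤ a (k + 2) * a k) (n : ℕ) :
    a 1 ^ (n + 1) ≤ a (n + 1) * a 0 ^ n := by
  induction n generalizing a with
  | zero => simp
  | succ n ih =>
    have shifted : a 2 ^ (n + 1) ≤ a (n + 2) * a 1 ^ n :=
      ih (a := fun k ↦ a (k + 1)) (fun k ↦ ha (k + 1)) (fun k ↦ hconv (k + 1))
    rcases (ha 1).eq_or_lt with h | hpos
    · rw [← h, zero_pow (Nat.succ_ne_zero _)]
      exact mul_nonneg (ha _) (pow_nonneg (ha 0) _)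
    · refine le_of_mul_le_mul_left ?_ (pow_pos hpos n)
      calc a 1 ^ n * a 1 ^ (n + 2) = (a 1 ^ 2) ^ (n + 1) := by ring
        _ ≤ (a 2 * a 0) ^ (n + 1) := pow_le_pow_left₀ (pow_nonneg (ha 1) 2) (hconv 0) _
        _ = a 2 ^ (n + 1) * a 0 ^ (n + 1) := mul_pow _ _ _
        _ ≤ a (n + 2) * a 1 ^ n * a 0 ^ (n + 1) :=
          mul_le_mul_of_nonneg_right shifted (pow_nonneg (ha 0) _)
        _ = a 1 ^ n * (a (n + 2) * a 0 ^ (n + 1)) := by ring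

theorem opNorm_pow_le_bound {𝕜 𝕜₂ E F : Type*} [NontriviallyNormedField 𝕜]
    [NontriviallyNormedField 𝕜₂] [SeminormedAddCommGroup E] [SeminormedAddCommGroup F]
    [NormedSpace 𝕜 E] [NormedSpace 𝕜₂ F] {σ : 𝕜 →+* 𝕜₂} [RingHomIsometric σ]
    (f : E →SL[σ] F) {n : ℕ} (hn : n ≠ 0) {C : ℝ} (hC : 0 ≤ C)
    (hf : ∀ x, ‖f x‖ ^ n ≤ C * ‖x‖ ^ n) : ‖f‖ ^ n ≤ C := by
  have root_pow : (C ^ (n⁻¹ : ℝ)) ^ n = C := Real.rpow_inv_natCast_pow hC hn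
  have norm_le_root : ‖f‖ ≤ C ^ (n⁻¹ : ℝ) := by
    refine f.opNorm_le_bound (by positivity) fun x ↦ ?_
    refine le_of_pow_le_pow_left₀ hn (by positivity) ?_
    rw [mul_pow, root_pow]
    exact hf x
  calc ‖f‖ ^ n ≤ (C ^ (n⁻¹ : ℝ)) ^ n := pow_le_pow_left₀ (norm_nonneg f) norm_le_root n
    _ = C := root_pow

section NormSqLe

variable {𝕜 E : Type*} [NontriviallyNormedField 𝕜] [SeminormedAddCommGroup E] [NormedSpace 𝕜 E]

theorem norm_apply_pow_succ_le_of_norm_apply_sq_le {A : E →L[𝕜] E}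
    (hA : ∀ x, ‖A x‖ ^ 2 ≤ ‖A (A x)‖ * ‖x‖) (n : ℕ) (x : E) :
    ‖A x‖ ^ (n + 1) ≤ ‖(A ^ (n + 1)) x‖ * ‖x‖ ^ n := by
  have log_convex (k : ℕ) : ‖(A ^ (k + 1)) x‖ ^ 2 ≤ ‖(A ^ (k + 2)) x‖ * ‖(A ^ k) x‖ := by
    simpa [pow_succ'] using hA ((A ^ k) x)
  simpa using pow_succ_le_mul_pow_of_sq_le_mul (a := fun k ↦ ‖(A ^ k) x‖)
    (fun k ↦ norm_nonneg _) log_convex n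

theorem opNorm_pow_of_norm_apply_sq_le {A : E →L[𝕜] E}
    (hA : ∀ x, ‖A x‖ ^ 2 ≤ ‖A (A x)‖ * ‖x‖) {n : ℕ} (hn : n ≠ 0) :
    ‖A ^ n‖ = ‖A‖ ^ n := by
  refine le_antisymm (norm_pow_le' A (Nat.pos_of_ne_zero hn)) ?_
  obtain ⟨m, rfl⟩ := Nat.exists_eq_succ_of_ne_zero hn
  refine opNorm_pow_le_bound A hn (norm_nonneg _) fun x ↦ ?_
  calc ‖A x‖ ^ (m + 1) ≤ ‖(A ^ (m + 1)) x‖ * ‖x‖ ^ m :=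
        norm_apply_pow_succ_le_of_norm_apply_sq_le hA m x
    _ ≤ ‖A ^ (m + 1)‖ * ‖x‖ * ‖x‖ ^ m := by gcongr; exact le_opNorm _ _
    _ = ‖A ^ (m + 1)‖ * ‖x‖ ^ (m + 1) := by ring

end NormSqLe

theorem spectralRadius_eq_nnnorm_of_frequently_norm_pow_eq {B : Type*} [NormedRing B]
    [NormedAlgebra ℂ B] [CompleteSpace B] {b : B} (hb : ∃ᶠ n in atTop, ‖b ^ n‖ = ‖b‖ ^ n) :
    spectralRadius ℂ b = ‖b‖₊ := by
  refine tendsto_nhds_unique_of_frequently_eq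
    (spectrum.pow_norm_pow_one_div_tendsto_nhds_spectralRadius b) tendsto_const_nhds ?_
  refine (hb.and_eventually (eventually_ne_atTop 0)).mono fun n ⟨hpow, hn⟩ ↦ ?_
  rw [hpow, one_div, Real.pow_rpow_inv_natCast (norm_nonneg b) hn, ofReal_norm, enorm_eq_nnnorm]

theorem paranormal_normaloid_general {E : Type*} [NormedAddCommGroup E] [NormedSpace ℂ E]
    [CompleteSpace E] (A : E →L[ℂ] E) (hA : ∀ x, ‖A x‖ ^ 2 ≤ ‖A (A x)‖ * ‖x‖) :
    spectralRadius ℂ A = ‖A‖₊ := by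
  refine spectralRadius_eq_nnnorm_of_frequently_norm_pow_eq (Eventually.frequently ?_)
  filter_upwards [eventually_ne_atTop 0] with n hn
  exact opNorm_pow_of_norm_apply_sq_le hA hn

theorem paranormal_normaloid {H : Type*} [NormedAddCommGroup H]
    [InnerProductSpace ℂ H] [CompleteSpace H]
    (A : H →L[ℂ] H) (hA : Paranormal A) : Normaloid A :=
  paranormal_normaloid_general A hA
end

section
/- Let A ∈ B(H) be a class A operator on a complex Hilbert space H, and let M be a closed subspace of H invariant under A. Then the restriction of A to M, regarded as a bounded operator on the Hilbert space M, is a class A operator. -/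
/-!
Let `V : K → H` be an isometry with `A V = V B`; for a restriction, `V` is the inclusion of `M`.
Then `V* (A*A) V = B*B` and `V* (A²)*A² V = (B²)*B²`, so compressing `|A|² ≤ |A²|` along `V` gives
`|B|² ≤ V* |A²| V`. Hansen's inequality `V* √T V ≤ √(V* T V)` for the operator monotone square root
bounds the right-hand side by `√(V* |A²|² V) = |B²|`.
-/

open ContinuousLinearMap Filter

set_option synthInstance.maxHeartbeats 400000

section Compression

variable {𝕜 E F G G' : Type*} [RCLike 𝕜]
  [NormedAddCommGroup E] [InnerProductSpace 𝕜 E] [CompleteSpace E]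
  [NormedAddCommGroup F] [InnerProductSpace 𝕜 F] [CompleteSpace F]
  [NormedAddCommGroup G] [InnerProductSpace 𝕜 G] [CompleteSpace G]
  [NormedAddCommGroup G'] [InnerProductSpace 𝕜 G'] [CompleteSpace G']

lemma adjoint_conj_le_adjoint_conj {S T : E →L[𝕜] E} (hST : S ≤ T) (V : F →L[𝕜] E) :
    adjoint V ∘L S ∘L V ≤ adjoint V ∘L T ∘L V := by
  rw [ContinuousLinearMap.le_def] at hST ⊢
  simpa only [sub_comp, comp_sub] using hST.adjoint_conj V

lemma self_comp_adjoint_le_one {V : F →L[𝕜] E} (hV : ‖V‖ ≤ 1) : V ∘L adjoint V ≤ 1 := by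
  have hV' : ‖adjoint V‖ ≤ 1 := by rwa [LinearIsometryEquiv.norm_map]
  rw [ContinuousLinearMap.le_def, isPositive_def']
  refine ⟨(IsSelfAdjoint.one _).sub (isPositive_self_comp_adjoint V).isSelfAdjoint, fun x => ?_⟩
  have hx : ‖adjoint V x‖ ≤ ‖x‖ := by
    simpa only [one_mul] using (adjoint V).le_of_opNorm_le hV' x
  rw [reApplyInnerSelf_apply, sub_apply, inner_sub_left, map_sub, comp_apply,
    ← adjoint_inner_right V, one_apply_eq_self, inner_self_eq_norm_sq, inner_self_eq_norm_sq,
    sub_nonneg]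
  gcongr

lemma adjoint_conj_adjoint_comp_self {T : E →L[𝕜] G'} {S : F →L[𝕜] G} {V : F →L[𝕜] E}
    (W : G →ₗᵢ[𝕜] G') (hTV : T ∘L V = W.toContinuousLinearMap ∘L S) :
    adjoint V ∘L (adjoint T ∘L T) ∘L V = adjoint S ∘L S :=
  calc adjoint V ∘L (adjoint T ∘L T) ∘L V = adjoint (T ∘L V) ∘L (T ∘L V) := by
        rw [adjoint_comp]; rfl
    _ = adjoint S ∘L (adjoint W.toContinuousLinearMap ∘L W.toContinuousLinearMap) ∘L S := by
        rw [hTV, adjoint_comp]; rfl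
    _ = adjoint S ∘L S := by
        rw [W.adjoint_comp_self]; rfl

end Compression

section ClassA

variable {H K : Type*} [NormedAddCommGroup H] [InnerProductSpace ℂ H] [CompleteSpace H]
  [NormedAddCommGroup K] [InnerProductSpace ℂ K] [CompleteSpace K]

theorem adjoint_conj_sqrt_le_sqrt_adjoint_conj {T : H →L[ℂ] H} (hT : 0 ≤ T)
    {V : K →L[ℂ] H} (hV : ‖V‖ ≤ 1) :
    adjoint V ∘L CFC.sqrt T ∘L V ≤ CFC.sqrt (adjoint V ∘L T ∘L V) := by
  set R := CFC.sqrt T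
  have hR : 0 ≤ R := CFC.sqrt_nonneg T
  have hRstar : adjoint R = R := hR.isSelfAdjoint.adjoint_eq
  have hRR : R ∘L R = T := CFC.sqrt_mul_sqrt_self T hT
  set Q := adjoint V ∘L R ∘L V
  have hQ : 0 ≤ Q :=
    (nonneg_iff_isPositive _).2 (((nonneg_iff_isPositive R).1 hR).adjoint_conj V)
  have hQQ : Q * Q ≤ adjoint V ∘L T ∘L V :=
    calc Q * Q = adjoint (R ∘L V) ∘L (V ∘L adjoint V) ∘L (R ∘L V) := by
          rw [adjoint_comp, hRstar]; rfl
      _ ≤ adjoint (R ∘L V) ∘L 1 ∘L (R ∘L V) :=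
          adjoint_conj_le_adjoint_conj (self_comp_adjoint_le_one hV) _
      _ = adjoint V ∘L T ∘L V := by
          rw [adjoint_comp, hRstar, ← hRR]; rfl
  calc Q = CFC.sqrt (Q * Q) := (CFC.sqrt_mul_self Q hQ).symm
    _ ≤ CFC.sqrt (adjoint V ∘L T ∘L V) := CFC.sqrt_le_sqrt _ _ hQQ

lemma adjoint_conj_abs_le_abs {T : H →L[ℂ] H} {S : K →L[ℂ] K} {V : K →L[ℂ] H} (hV : ‖V‖ ≤ 1)
    (W : K →ₗᵢ[ℂ] H) (hTV : T ∘L V = W.toContinuousLinearMap ∘L S) :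
    adjoint V ∘L CFC.abs T ∘L V ≤ CFC.abs S := by
  have hansen := adjoint_conj_sqrt_le_sqrt_adjoint_conj (star_mul_self_nonneg T) hV
  rwa [star_eq_adjoint, mul_def, adjoint_conj_adjoint_comp_self W hTV] at hansen

lemma opAbs_eq_abs (T : H →L[ℂ] H) : opAbs T = CFC.abs T := by
  have hT : 0 ≤ adjoint T * T := star_mul_self_nonneg T
  rw [CFC.abs, star_eq_adjoint, CFC.sqrt_eq_real_sqrt _ hT, cfcₙ_eq_cfc, opAbs]

lemma classA_iff_adjoint_comp_self_le_abs_sq (T : H →L[ℂ] H) :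
    ClassA T ↔ adjoint T ∘L T ≤ CFC.abs (T ^ 2) := by
  rw [ClassA, opAbs_eq_abs, opAbs_eq_abs, sq (CFC.abs T), CFC.abs_mul_abs, star_eq_adjoint,
    mul_def]

theorem classA_restrict_general {A : H →L[ℂ] H} (hA : ClassA A) {B : K →L[ℂ] K}
    (V : K →ₗᵢ[ℂ] H)
    (hAB : A ∘L V.toContinuousLinearMap = V.toContinuousLinearMap ∘L B) : ClassA B := by
  rw [classA_iff_adjoint_comp_self_le_abs_sq] at hA ⊢
  set W : K →L[ℂ] H := V.toContinuousLinearMap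
  have hAB_sq : (A ^ 2) ∘L W = W ∘L (B ^ 2) := by
    rw [sq, sq, mul_def, mul_def, comp_assoc, hAB, ← comp_assoc, hAB, comp_assoc]
  calc adjoint B ∘L B = adjoint W ∘L (adjoint A ∘L A) ∘L W :=
        (adjoint_conj_adjoint_comp_self V hAB).symm
    _ ≤ adjoint W ∘L CFC.abs (A ^ 2) ∘L W := adjoint_conj_le_adjoint_conj hA W
    _ ≤ CFC.abs (B ^ 2) := adjoint_conj_abs_le_abs V.norm_toContinuousLinearMap_le V hAB_sq

end ClassA

theorem classA_restrict {H : Type*} [NormedAddCommGroup H]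
    [InnerProductSpace ℂ H] [CompleteSpace H]
    (A : H →L[ℂ] H) (hA : ClassA A)
    (M : Submodule ℂ H) (hMc : IsClosed (M : Set H)) (hInv : ∀ x ∈ M, A x ∈ M) :
    haveI : CompleteSpace M := hMc.completeSpace_coe
    ClassA (restrictOp A M hInv) := by
  have : CompleteSpace M := hMc.completeSpace_coe
  exact classA_restrict_general hA M.subtypeₗᵢ rfl
end
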